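/- Every K-algebra automorphism of the polynomial ring K[x,y] in two variables over an algebraically closed field K of characteristic zero is tame, i.e., it is a composition of elementary and linear automorphisms. -/

import Mathlib

open MvPolynomial

/-- An automorphism of `K[x_1,…,x_n]` is *elementary* if it sends some variable `x_i` to
`x_i + F`, where `F` is a polynomial in the remaining variables, and fixes all other variables. -/
def IsElementary {K : Type*} [CommRing K] {n : ℕ}
    (φ : MvPolynomial (Fin n) K ≃ₐ[K] MvPolynomial (Fin n) K) : Prop :=
  ∃ (i : Fin n) (F : MvPolynomial (Fin n) K), i ∉ F.vars ∧
    φ (X i) = X i + F ∧ ∀ j : Fin n, j ≠ i → φ (X j) = X j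

/-- An automorphism of `K[x_1,…,x_n]` is *linear* if it sends each variable to a
`K`-linear combination of the variables. -/
def IsLinearAut {K : Type*} [CommRing K] {n : ℕ}
    (φ : MvPolynomial (Fin n) K ≃ₐ[K] MvPolynomial (Fin n) K) : Prop :=
  ∀ i : Fin n, ∃ c : Fin n → K, φ (X i) = ∑ j : Fin n, C (c j) * X j

/-- An automorphism is *tame* if it is a composition of elementary and linear automorphisms. -/
def IsTame {K : Type*} [CommRing K] {n : ℕ}
    (φ : MvPolynomial (Fin n) K ≃ₐ[K] MvPolynomial (Fin n) K) : Prop :=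
  ∃ l : List (MvPolynomial (Fin n) K ≃ₐ[K] MvPolynomial (Fin n) K),
    (∀ ψ ∈ l, IsElementary ψ ∨ IsLinearAut ψ) ∧ φ = l.prod


set_option linter.unusedSectionVars false
set_option autoImplicit false

section LND
variable {R : Type*} [CommRing R] [IsDomain R] [CharZero R] {K : Type*} [CommRing K] [Algebra K R]

/-- `u` has exact nilpotency degree `a`. -/
def JIsN (Δ : Derivation K R R) (u : R) (a : ℕ) : Prop := Δ^[a] u ≠ 0 ∧ Δ^[a+1] u = 0

/-- local nilpotency. -/
def JLN (Δ : Derivation K R R) : Prop := ∀ u, ∃ n : ℕ, Δ^[n] u = 0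

lemma JLN.exists_isN {Δ : Derivation K R R} (h : JLN Δ) {u : R} (hu : u ≠ 0) :
    ∃ a, JIsN Δ u a := by
  classical
  have hn := h u
  have h0 : Nat.find hn ≠ 0 := by
    intro h0
    have := Nat.find_spec hn
    rw [h0] at this
    exact hu this
  obtain ⟨a, ha⟩ := Nat.exists_eq_succ_of_ne_zero h0
  refine ⟨a, Nat.find_min hn (by omega), ?_⟩
  have := Nat.find_spec hn
  rwa [ha] at this

lemma jiter_zero (Δ : Derivation K R R) (n : ℕ) : Δ^[n] 0 = 0 := by
  induction n with
  | zero => rfl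
  | succ n ih => rw [Function.iterate_succ_apply, map_zero, ih]

lemma jiter_add (Δ : Derivation K R R) (n : ℕ) (u v : R) :
    Δ^[n] (u + v) = Δ^[n] u + Δ^[n] v := by
  induction n generalizing u v with
  | zero => rfl
  | succ n ih => simp only [Function.iterate_succ_apply, map_add, ih]

lemma jiter_le {Δ : Derivation K R R} {m n : ℕ} (h : m ≤ n) {u : R} (hu : Δ^[m] u = 0) :
    Δ^[n] u = 0 := by
  obtain ⟨k, rfl⟩ := Nat.exists_eq_add_of_le' h
  rw [Function.iterate_add_apply, hu, jiter_zero]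

lemma JIsN.unique {Δ : Derivation K R R} {u : R} {a b : ℕ} (h : JIsN Δ u a) (h' : JIsN Δ u b) :
    a = b := by
  rcases lt_trichotomy a b with hl | hl | hl
  · exact absurd (jiter_le hl h.2) h'.1
  · exact hl
  · exact absurd (jiter_le hl h'.2) h.1

lemma jiter_mul_zero (Δ : Derivation K R R) (s : ℕ) : ∀ (a b : ℕ) (u v : R), a + b ≤ s + 1 →
    Δ^[a] u = 0 → Δ^[b] v = 0 → Δ^[s] (u * v) = 0 := by
  induction s with
  | zero =>
    intro a b u v hab hu hv
    rcases Nat.eq_zero_or_pos a with rfl | ha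
    · simp only [Function.iterate_zero, id] at hu
      simp [hu]
    · have hb : b = 0 := by omega
      subst hb
      simp only [Function.iterate_zero, id] at hv
      simp [hv]
  | succ s ih =>
    intro a b u v hab hu hv
    rcases Nat.eq_zero_or_pos a with rfl | ha
    · simp only [Function.iterate_zero, id] at hu
      rw [hu, zero_mul, jiter_zero]
    rcases Nat.eq_zero_or_pos b with rfl | hb
    · simp only [Function.iterate_zero, id] at hv
      rw [hv, mul_zero, jiter_zero]
    obtain ⟨a, rfl⟩ := Nat.exists_eq_succ_of_ne_zero ha.ne'
    obtain ⟨b, rfl⟩ := Nat.exists_eq_succ_of_ne_zero hb.ne'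
    rw [Function.iterate_succ_apply, Derivation.leibniz, jiter_add, smul_eq_mul, smul_eq_mul,
      ih (a+1) b u (Δ v) (by omega) hu (by simpa [Function.iterate_succ_apply] using hv),
      ih (b+1) a v (Δ u) (by omega) hv (by simpa [Function.iterate_succ_apply] using hu), add_zero]

lemma jiter_mul_top (Δ : Derivation K R R) (s : ℕ) : ∀ (a b : ℕ) (u v : R), a + b = s →
    Δ^[a+1] u = 0 → Δ^[b+1] v = 0 →
    Δ^[s] (u * v) = (s.choose a : R) * (Δ^[a] u * Δ^[b] v) := by
  induction s with
  | zero =>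
    intro a b u v hab hu hv
    obtain ⟨rfl, rfl⟩ : a = 0 ∧ b = 0 := by omega
    simp
  | succ s ih =>
    intro a b u v hab hu hv
    have key : Δ^[s+1] (u * v) = Δ^[s] (u * Δ v) + Δ^[s] (v * Δ u) := by
      rw [Function.iterate_succ_apply, Derivation.leibniz, jiter_add, smul_eq_mul, smul_eq_mul]
    rw [key]
    rcases a with _ | a
    · obtain rfl : b = s + 1 := by omega
      have hu' : Δ u = 0 := by simpa using hu
      rw [hu', mul_zero, jiter_zero, ih 0 s u (Δ v) (by omega) hu
        (by simpa [Function.iterate_succ_apply] using hv)]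
      simp [Function.iterate_succ_apply]
    rcases b with _ | b
    · obtain rfl : a = s := by omega
      have hv' : Δ v = 0 := by simpa using hv
      rw [hv', mul_zero, jiter_zero, ih 0 a v (Δ u) (by omega) hv
        (by simpa [Function.iterate_succ_apply] using hu)]
      simp [Function.iterate_succ_apply, mul_comm]
    · rw [ih (a+1) b u (Δ v) (by omega) hu (by simpa [Function.iterate_succ_apply] using hv),
        mul_comm v, ih a (b+1) (Δ u) v (by omega) (by simpa [Function.iterate_succ_apply] using hu)
        hv, Nat.choose_succ_succ]
      simp only [Function.iterate_succ_apply]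
      push_cast
      ring

lemma JIsN.mul {Δ : Derivation K R R} {u v : R} {a b : ℕ} (h : JIsN Δ u a) (h' : JIsN Δ v b) :
    JIsN Δ (u * v) (a + b) := by
  refine ⟨?_, jiter_mul_zero Δ _ (a+1) (b+1) u v (by omega) h.2 h'.2⟩
  rw [jiter_mul_top Δ _ a b u v rfl h.2 h'.2]
  have : ((a+b).choose a : R) ≠ 0 := by
    exact_mod_cast (Nat.choose_pos (by omega)).ne'
  exact mul_ne_zero this (mul_ne_zero h.1 h'.1)

lemma jisN_zero {Δ : Derivation K R R} {u : R} (hu : u ≠ 0) (h : Δ u = 0) : JIsN Δ u 0 :=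
  ⟨hu, h⟩

lemma JIsN.pow {Δ : Derivation K R R} {u : R} {a : ℕ} (h : JIsN Δ u a) (n : ℕ) :
    JIsN Δ (u ^ n) (n * a) := by
  induction n with
  | zero => simpa using jisN_zero (Δ := Δ) (u := (1 : R)) one_ne_zero (by simp)
  | succ n ih =>
    rw [pow_succ, add_mul, one_mul]
    exact ih.mul h

lemma JLN.factor {Δ : Derivation K R R} (h : JLN Δ) {u v : R} (huv : u * v ≠ 0)
    (hz : Δ (u * v) = 0) : Δ u = 0 := by
  obtain ⟨a, ha⟩ := h.exists_isN (left_ne_zero_of_mul huv)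
  obtain ⟨b, hb⟩ := h.exists_isN (right_ne_zero_of_mul huv)
  have := (ha.mul hb).unique (jisN_zero huv hz)
  obtain rfl : a = 0 := by omega
  exact ha.2

lemma JIsN.succ_of {Δ : Derivation K R R} {u : R} {a b : ℕ} (h : JIsN Δ u a)
    (h' : JIsN Δ (Δ u) b) : a = b + 1 := by
  refine h.unique ⟨?_, ?_⟩
  · rw [Function.iterate_succ_apply]; exact h'.1
  · rw [Function.iterate_succ_apply]; exact h'.2
end LND

section Jac
variable {K : Type*} [Field K] [CharZero K]

/-- Jacobian derivation. -/
noncomputable def jac (f : MvPolynomial (Fin 2) K) :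
    Derivation K (MvPolynomial (Fin 2) K) (MvPolynomial (Fin 2) K) :=
  pderiv 0 f • pderiv 1 - pderiv 1 f • pderiv 0

lemma jac_apply (f u : MvPolynomial (Fin 2) K) :
    jac f u = pderiv 0 f * pderiv 1 u - pderiv 1 f * pderiv 0 u := by
  simp [jac]

lemma jac_self (f : MvPolynomial (Fin 2) K) : jac f f = 0 := by
  rw [jac_apply]; ring

lemma jac_X0 (f : MvPolynomial (Fin 2) K) : jac f (X 0) = - pderiv 1 f := by
  rw [jac_apply, pderiv_X_self, pderiv_X_of_ne (by decide)]; ring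

lemma jac_X1 (f : MvPolynomial (Fin 2) K) : jac f (X 1) = pderiv 0 f := by
  rw [jac_apply, pderiv_X_self, pderiv_X_of_ne (by decide)]; ring

lemma jac_sub (f g u : MvPolynomial (Fin 2) K) : jac (f - g) u = jac f u - jac g u := by
  simp only [jac_apply, map_sub]; ring

lemma jac_neg_comm (f u : MvPolynomial (Fin 2) K) : jac f u = - jac u f := by
  simp only [jac_apply]; ring

/-- chain rule -/
lemma pderiv_alg (φ : MvPolynomial (Fin 2) K →ₐ[K] MvPolynomial (Fin 2) K) (i : Fin 2)
    (u : MvPolynomial (Fin 2) K) :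
    pderiv i (φ u) = φ (pderiv 0 u) * pderiv i (φ (X 0)) + φ (pderiv 1 u) * pderiv i (φ (X 1)) := by
  induction u using MvPolynomial.induction_on with
  | C a =>
    have : φ (C a) = C a := φ.commutes a
    simp [this]
  | add p q hp hq => simp only [map_add, hp, hq]; ring
  | mul_X p j hp =>
    fin_cases j
    · simp only [Fin.zero_eta, map_mul, pderiv_mul, hp, map_add, pderiv_X_self,
        pderiv_X_of_ne (show (0 : Fin 2) ≠ 1 by decide), map_one, map_zero]
      ring
    · simp only [Fin.mk_one, map_mul, pderiv_mul, hp, map_add, pderiv_X_self,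
        pderiv_X_of_ne (show (1 : Fin 2) ≠ 0 by decide), map_one, map_zero]
      ring

lemma jac_alg (φ : MvPolynomial (Fin 2) K →ₐ[K] MvPolynomial (Fin 2) K)
    (u v : MvPolynomial (Fin 2) K) :
    jac (φ u) (φ v) = φ (jac u v) * jac (φ (X 0)) (φ (X 1)) := by
  simp only [jac_apply, pderiv_alg φ _ u, pderiv_alg φ _ v, map_sub, map_mul]
  ring

lemma jac_unit (φ : MvPolynomial (Fin 2) K ≃ₐ[K] MvPolynomial (Fin 2) K) :
    ∃ c : K, c ≠ 0 ∧ jac (φ (X 0)) (φ (X 1)) = C c := by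
  have h : jac (φ (φ.symm (X 0))) (φ (φ.symm (X 1))) = φ (jac (φ.symm (X 0)) (φ.symm (X 1))) *
      jac (φ (X 0)) (φ (X 1)) :=
    jac_alg (φ : MvPolynomial (Fin 2) K →ₐ[K] MvPolynomial (Fin 2) K)
      (φ.symm (X 0)) (φ.symm (X 1))
  rw [AlgEquiv.apply_symm_apply, AlgEquiv.apply_symm_apply] at h
  rw [jac_X1, pderiv_X_self] at h
  have hu : IsUnit (jac (φ (X 0)) (φ (X 1))) := by
    apply isUnit_of_dvd_one
    refine ⟨φ (jac (φ.symm (X 0)) (φ.symm (X 1))), ?_⟩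
    rw [mul_comm, ← h]
  rw [isUnit_iff_eq_C_of_isReduced] at hu
  obtain ⟨c, hc, h⟩ := hu
  exact ⟨c, hc.ne_zero, h⟩

lemma jac_LN (φ : MvPolynomial (Fin 2) K ≃ₐ[K] MvPolynomial (Fin 2) K) :
    JLN (jac (φ (X 0))) := by
  obtain ⟨c, hc, hJ⟩ := jac_unit φ
  have h1 : ∀ u, jac (φ (X 0)) (φ u) = C c * φ (pderiv 1 u) := by
    intro u
    have h : jac (φ (X 0)) (φ u) = φ (jac (X 0) u) * jac (φ (X 0)) (φ (X 1)) :=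
      jac_alg (φ : MvPolynomial (Fin 2) K →ₐ[K] MvPolynomial (Fin 2) K) (X 0) u
    rw [h, hJ, jac_apply (X 0), pderiv_X_self, pderiv_X_of_ne (by decide)]
    ring_nf
  have h2 : ∀ n u, (jac (φ (X 0)))^[n] (φ u) = C (c ^ n) * φ ((pderiv 1)^[n] u) := by
    intro n
    induction n with
    | zero => intro u; simp
    | succ n ih =>
      intro u
      rw [Function.iterate_succ_apply', ih, Derivation.leibniz, h1, Function.iterate_succ_apply',
        smul_eq_mul, smul_eq_mul, ← MvPolynomial.algebraMap_eq, Derivation.map_algebraMap,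
        pow_succ, map_mul]
      ring
  intro v
  obtain ⟨u, rfl⟩ := φ.surjective v
  have h3 : ∀ n (m : Fin 2 →₀ ℕ), coeff m ((pderiv 1)^[n] u) ≠ 0 →
      ∃ m' ∈ u.support, m 1 + n ≤ m' 1 := by
    intro n
    induction n with
    | zero =>
      intro m hm
      exact ⟨m, by simpa using hm, by simp⟩
    | succ n ih =>
      intro m hm
      rw [Function.iterate_succ_apply', coeff_pderiv] at hm
      obtain ⟨m', h, h'⟩ := ih _ (left_ne_zero_of_mul hm)
      refine ⟨m', h, ?_⟩
      simp at h'
      omega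
  refine ⟨u.support.sup (fun m => m 1) + 1, ?_⟩
  rw [h2]
  have : ((pderiv 1)^[u.support.sup (fun m => m 1) + 1] u) = 0 := by
    ext m
    by_contra hm
    obtain ⟨m', hm', hle⟩ := h3 _ m hm
    have := Finset.le_sup (f := fun m : Fin 2 →₀ ℕ => m 1) hm'
    omega
  rw [this]; simp

/-- integer weight of an exponent -/
def jwt (w : Fin 2 → ℕ) (m : Fin 2 →₀ ℕ) : ℤ := w 0 * m 0 + w 1 * m 1

lemma jwt_add (w : Fin 2 → ℕ) (m m' : Fin 2 →₀ ℕ) : jwt w (m + m') = jwt w m + jwt w m' := by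
  simp [jwt]; ring

lemma jwt_single (w : Fin 2 → ℕ) (i : Fin 2) : jwt w (Finsupp.single i 1) = w i := by
  fin_cases i <;> simp [jwt]

/-- polynomials with all weights in T -/
noncomputable def JW (K : Type*) [Field K] (w : Fin 2 → ℕ) (T : Set ℤ) : Submodule K (MvPolynomial (Fin 2) K) :=
  restrictSupport K {m | jwt w m ∈ T}

lemma mem_JW {w : Fin 2 → ℕ} {T : Set ℤ} {u : MvPolynomial (Fin 2) K} :
    u ∈ JW K w T ↔ ∀ m, coeff m u ≠ 0 → jwt w m ∈ T := by
  rw [JW, mem_restrictSupport_iff]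
  simp [Set.subset_def]

lemma JW_mul {w : Fin 2 → ℕ} {S T U : Set ℤ} (h : ∀ s ∈ S, ∀ t ∈ T, s + t ∈ U)
    {u v : MvPolynomial (Fin 2) K} (hu : u ∈ JW K w S) (hv : v ∈ JW K w T) :
    u * v ∈ JW K w U := by
  rw [mem_JW] at *
  intro m hm
  rw [coeff_mul] at hm
  obtain ⟨⟨a, b⟩, hab, hne⟩ := Finset.exists_ne_zero_of_sum_ne_zero hm
  rw [Finset.HasAntidiagonal.mem_antidiagonal] at hab
  simp only at hab hne
  rw [← hab, jwt_add]
  exact h _ (hu a (left_ne_zero_of_mul hne)) _ (hv b (right_ne_zero_of_mul hne))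

lemma JW_pderiv {w : Fin 2 → ℕ} {S U : Set ℤ} (i : Fin 2) (h : ∀ s ∈ S, s - w i ∈ U)
    {u : MvPolynomial (Fin 2) K} (hu : u ∈ JW K w S) :
    pderiv i u ∈ JW K w U := by
  rw [mem_JW] at *
  intro m hm
  rw [coeff_pderiv] at hm
  have := h _ (hu _ (left_ne_zero_of_mul hm))
  rw [jwt_add, jwt_single] at this
  simpa using this

lemma JW_jac {w : Fin 2 → ℕ} {S T U : Set ℤ} (h : ∀ s ∈ S, ∀ t ∈ T, s + t - w 0 - w 1 ∈ U)
    {u v : MvPolynomial (Fin 2) K} (hu : u ∈ JW K w S) (hv : v ∈ JW K w T) :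
    jac u v ∈ JW K w U := by
  rw [jac_apply]
  have key : ∀ i j : Fin 2, (∀ s ∈ S, ∀ t ∈ T, s + t - w i - w j ∈ U) →
      pderiv i u * pderiv j v ∈ JW K w U := by
    intro i j hij
    refine JW_mul (S := {x | x + w i ∈ S}) (T := {x | x + w j ∈ T}) ?_
      (JW_pderiv i (by intro s hs; simpa using hs) hu) (JW_pderiv j (by intro s hs; simpa using hs) hv)
    intro s hs t ht
    have := hij _ hs _ ht
    convert this using 1
    ring
  refine Submodule.sub_mem _ (key 0 1 h) (key 1 0 ?_)
  intro s hs t ht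
  have := h s hs t ht
  convert this using 1
  ring

lemma JW_mono {w : Fin 2 → ℕ} {S U : Set ℤ} (h : S ⊆ U)
    {u : MvPolynomial (Fin 2) K} (hu : u ∈ JW K w S) : u ∈ JW K w U := by
  rw [mem_JW] at *
  exact fun m hm => h (hu m hm)

lemma JW_disj {w : Fin 2 → ℕ} {S U : Set ℤ} (h : ∀ s ∈ S, s ∉ U)
    {u : MvPolynomial (Fin 2) K} (hu : u ∈ JW K w S) (hu' : u ∈ JW K w U) : u = 0 := by
  rw [mem_JW] at *
  ext m
  by_contra hm
  exact h _ (hu m hm) (hu' m hm)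

/-- The leading form of a locally nilpotent Jacobian derivation is locally nilpotent. -/
lemma LN_top {w : Fin 2 → ℕ} {f F : MvPolynomial (Fin 2) K} {N : ℤ} (hf : JLN (jac f))
    (hF : F ∈ JW K w {N}) (hfF : f - F ∈ JW K w (Set.Iic (N - 1))) : JLN (jac F) := by
  have hf' : f ∈ JW K w (Set.Iic N) := by
    have h1 : F ∈ JW K w (Set.Iic N) := JW_mono (by simp) hF
    have h2 := JW_mono (U := Set.Iic N) (by intro s hs; simp at *; omega) hfF
    simpa using Submodule.add_mem _ h1 h2
  have hH : ∀ (n : ℕ) k u, u ∈ JW K w {k} → (jac F)^[n] u ∈ JW K w {k + n * (N - w 0 - w 1)} := by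
    intro n
    induction n with
    | zero => intro k u hu; simpa using hu
    | succ n ih =>
      intro k u hu
      rw [Function.iterate_succ_apply']
      refine JW_jac ?_ hF (ih k u hu)
      intro s hs t ht
      simp at hs ht ⊢
      rw [hs, ht]; ring
  have hM : ∀ (n : ℕ) k u, u ∈ JW K w {k} →
      (jac f)^[n] u - (jac F)^[n] u ∈ JW K w (Set.Iic (k + n * (N - w 0 - w 1) - 1)) := by
    intro n
    induction n with
    | zero => intro k u hu; simp
    | succ n ih =>
      intro k u hu
      rw [Function.iterate_succ_apply', Function.iterate_succ_apply']
      have e : jac f ((jac f)^[n] u) - jac F ((jac F)^[n] u)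
        = jac f ((jac f)^[n] u - (jac F)^[n] u) + jac (f - F) ((jac F)^[n] u) := by
        rw [jac_sub, map_sub]; ring
      rw [e]
      refine Submodule.add_mem _ (JW_jac ?_ hf' (ih k u hu)) (JW_jac ?_ hfF (hH n k u hu))
      · intro s hs t ht
        simp at hs ht ⊢
        linarith
      · intro s hs t ht
        simp at hs ht ⊢
        linarith
  intro u
  induction u using MvPolynomial.induction_on' with
  | monomial m a =>
    obtain ⟨n, hn⟩ := hf (monomial m a)
    have hm : monomial m a ∈ JW K w {jwt w m} := by
      rw [mem_JW]
      intro m' hm'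
      rw [coeff_monomial] at hm'
      have : m = m' := by by_contra h; simp [h] at hm'
      simp [this]
    have h1 := hM n _ _ hm
    rw [hn, zero_sub] at h1
    have h1 := Submodule.neg_mem _ h1
    rw [neg_neg] at h1
    exact ⟨n, JW_disj (by intro s hs; simp at hs ⊢; omega) (hH n _ _ hm) h1⟩
  | add p q hp hq =>
    obtain ⟨a, ha⟩ := hp
    obtain ⟨b, hb⟩ := hq
    refine ⟨a + b, ?_⟩
    rw [jiter_add, jiter_le (Nat.le_add_right a b) ha, jiter_le (Nat.le_add_left b a) hb, add_zero]

/-- the part of `f` of weight `N` -/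
noncomputable def jtop (w : Fin 2 → ℕ) (N : ℤ) (f : MvPolynomial (Fin 2) K) :
    MvPolynomial (Fin 2) K :=
  ∑ m ∈ f.support with jwt w m = N, monomial m (coeff m f)

lemma coeff_jtop (w : Fin 2 → ℕ) (N : ℤ) (f : MvPolynomial (Fin 2) K) (m : Fin 2 →₀ ℕ) :
    coeff m (jtop w N f) = if jwt w m = N then coeff m f else 0 := by
  classical
  simp only [jtop, coeff_sum, coeff_monomial]
  rw [Finset.sum_ite_eq' ]
  by_cases h : coeff m f = 0 <;> simp [h]

lemma jtop_mem (w : Fin 2 → ℕ) (N : ℤ) (f : MvPolynomial (Fin 2) K) : jtop w N f ∈ JW K w {N} := by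
  rw [mem_JW]
  intro m hm
  rw [coeff_jtop] at hm
  by_contra h
  simp at h
  simp [h] at hm

lemma sub_jtop_mem (w : Fin 2 → ℕ) (N : ℤ) (f : MvPolynomial (Fin 2) K)
    (hf : ∀ m, coeff m f ≠ 0 → jwt w m ≤ N) : f - jtop w N f ∈ JW K w (Set.Iic (N - 1)) := by
  rw [mem_JW]
  intro m hm
  rw [coeff_sub, coeff_jtop] at hm
  by_cases h : jwt w m = N
  · simp [h] at hm
  · simp [h] at hm
    have := hf m hm
    simp; omega
end Jac

section Lead
variable {K : Type*} [Field K] [CharZero K]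

lemma X_pow_dvd_of (F : MvPolynomial (Fin 2) K) (i : Fin 2) (k : ℕ)
    (h : ∀ m, coeff m F ≠ 0 → k ≤ m i) : X i ^ k ∣ F := by
  rw [F.as_sum]
  refine Finset.dvd_sum fun m hm => ?_
  have hk := h m (by simpa using hm)
  refine ⟨monomial (m - Finsupp.single i k) (coeff m F), ?_⟩
  rw [X_pow_eq_monomial, monomial_mul, one_mul]
  congr 2
  ext j
  by_cases hj : i = j
  · subst hj; simp; omega
  · simp [hj]

lemma coeff_of_pderiv_zero {F : MvPolynomial (Fin 2) K} {i : Fin 2} (h : pderiv i F = 0)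
    {m : Fin 2 →₀ ℕ} (hm : coeff m F ≠ 0) : m i = 0 := by
  by_contra hi
  have h1 := coeff_pderiv (i := i) F (m - Finsupp.single i 1)
  have h2 : m - Finsupp.single i 1 + Finsupp.single i 1 = m := by
    ext j
    by_cases hj : i = j
    · subst hj; simp; omega
    · simp [hj]
  rw [h, coeff_zero, h2] at h1
  have h3 : (((m - Finsupp.single i 1 : Fin 2 →₀ ℕ) i : ℕ) : K) + 1 ≠ 0 :=
    Nat.cast_add_one_ne_zero _
  exact mul_ne_zero hm h3 h1.symm

lemma monic_of_LN {f : MvPolynomial (Fin 2) K} (hf : JLN (jac f)) {n : ℕ} (hn : 0 < n)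
    (hdeg : ∀ m, coeff m f ≠ 0 → m 0 ≤ n) {m : Fin 2 →₀ ℕ} (hm : coeff m f ≠ 0) (hmn : m 0 = n) :
    m 1 = 0 := by
  have hw : ∀ m, jwt ![1, 0] m = m 0 := by intro m; simp [jwt]
  have hLN := LN_top hf (jtop_mem ![1, 0] n f) (sub_jtop_mem ![1, 0] n f (by
    intro m hm
    rw [hw]
    exact_mod_cast hdeg m hm))
  set F := jtop ![1, 0] n f with hF
  have hc : ∀ m, m 0 = n → coeff m F = coeff m f := by
    intro m h
    rw [hF, coeff_jtop, hw, h]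
    simp
  have hFm : coeff m F ≠ 0 := by rwa [hc m hmn]
  have hF0 : F ≠ 0 := by
    intro h; simp [h] at hFm
  obtain ⟨v, hv⟩ := X_pow_dvd_of F 0 1 (by
    intro m' hm'
    rw [hF, coeff_jtop, hw] at hm'
    have : m' 0 = n := by
      by_contra h
      have : ((m' 0 : ℕ) : ℤ) ≠ n := by exact_mod_cast h
      simp [this] at hm'
    omega)
  rw [pow_one] at hv
  have h0 : jac F (X 0) = 0 := hLN.factor (v := v) (by rwa [← hv]) (by rw [← hv, jac_self])
  rw [jac_X0, neg_eq_zero] at h0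
  exact coeff_of_pderiv_zero h0 hFm

lemma eq_sum_of_support (F : MvPolynomial (Fin 2) K) (e : ℕ → (Fin 2 →₀ ℕ))
    (s : Finset ℕ) (he : Set.InjOn e s) (h : ∀ m, coeff m F ≠ 0 → ∃ k ∈ s, m = e k) :
    F = ∑ k ∈ s, monomial (e k) (coeff (e k) F) := by
  classical
  ext m
  rw [coeff_sum]
  simp only [coeff_monomial]
  by_cases hm : coeff m F = 0
  · rw [hm, Finset.sum_eq_zero]
    intro k hk
    split_ifs with h'
    · rw [h', hm]
    · rfl
  · obtain ⟨k, hk, rfl⟩ := h m hm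
    rw [Finset.sum_eq_single k]
    · simp
    · intro b hb hbk
      rw [if_neg]
      intro h'
      exact hbk (he hb hk h')
    · intro h'; exact absurd hk h'

lemma homogenize_sub_pow (μ : K) (M : ℕ) :
    ((Polynomial.X - Polynomial.C μ) ^ M).homogenize M = (X 0 - C μ * X 1) ^ M := by
  have h1 : (Polynomial.X - Polynomial.C μ).homogenize 1 = X 0 - C μ * X 1 := by
    rw [sub_eq_add_neg, ← Polynomial.C_neg, Polynomial.homogenize_add, Polynomial.homogenize_X,
      Polynomial.homogenize_C]
    · simp; ring
    · simp
  induction M with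
  | zero => simp
  | succ M ih =>
    rw [pow_succ, Polynomial.homogenize_mul, ih, h1, pow_succ]
    · simp
    · simp

lemma lead_form [IsAlgClosed K] {F : MvPolynomial (Fin 2) K} (hLN : JLN (jac F)) {n p q : ℕ}
    (hn : 0 < n) (hp : 0 < p) (hq : 0 < q) (hpq : Nat.Coprime p q)
    (hF : ∀ m, coeff m F ≠ 0 → q * m 0 + p * m 1 = q * n)
    (hFn : coeff (Finsupp.single 0 n) F ≠ 0)
    {m₁ : Fin 2 →₀ ℕ} (hm₁ : coeff m₁ F ≠ 0) (hm₁' : 0 < m₁ 1) :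
    ∃ (M : ℕ) (c μ : K), c ≠ 0 ∧ μ ≠ 0 ∧ n = p * M ∧ F = C c * (X 1 ^ q - C μ * X 0 ^ p) ^ M ∧
      (p = 1 ∨ q = 1) := by
  have hF0 : F ≠ 0 := by rintro rfl; simp at hFn
  have hx : jac F (X 0) ≠ 0 := by
    intro h
    rw [jac_X0, neg_eq_zero] at h
    have := coeff_of_pderiv_zero h hm₁
    omega
  have hy : jac F (X 1) ≠ 0 := by
    intro h
    rw [jac_X1] at h
    have := coeff_of_pderiv_zero h hFn
    simp at this
    omega
  have hfac : ∀ u, u ∣ F → jac F u = 0 := by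
    rintro u ⟨v, hv⟩
    exact hLN.factor (v := v) (by rwa [← hv]) (by rw [← hv, jac_self])
  have hpx : ∀ k, 0 < k → jac F (X 0 ^ k) ≠ 0 := by
    intro k hk h
    obtain ⟨k, rfl⟩ := Nat.exists_eq_succ_of_ne_zero hk.ne'
    rw [pow_succ'] at h
    exact hx (hLN.factor (mul_ne_zero (X_ne_zero _) (pow_ne_zero _ (X_ne_zero _))) h)
  have hpy : ∀ k, 0 < k → jac F (X 1 ^ k) ≠ 0 := by
    intro k hk h
    obtain ⟨k, rfl⟩ := Nat.exists_eq_succ_of_ne_zero hk.ne'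
    rw [pow_succ'] at h
    exact hy (hLN.factor (mul_ne_zero (X_ne_zero _) (pow_ne_zero _ (X_ne_zero _))) h)
  set e : ℕ → (Fin 2 →₀ ℕ) := fun k => Finsupp.single 0 (n - p * k) + Finsupp.single 1 (q * k) with he
  set M := n / p with hM
  have hsupp : ∀ m, coeff m F ≠ 0 → ∃ k ∈ Finset.range (M + 1), m = e k := by
    intro m hm
    have h := hF m hm
    have hdv : q ∣ m 1 := by
      have : q ∣ p * m 1 := by
        rw [Nat.dvd_add_iff_right (Dvd.intro _ rfl : q ∣ q * m 0), h]
        exact Dvd.intro _ rfl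
      exact hpq.symm.dvd_of_dvd_mul_left this
    obtain ⟨k, hk⟩ := hdv
    have h2 : m 0 + p * k = n := by
      have : q * (m 0 + p * k) = q * n := by rw [← h, hk]; ring
      exact Nat.eq_of_mul_eq_mul_left hq this
    refine ⟨k, ?_, ?_⟩
    · rw [Finset.mem_range, Nat.lt_succ_iff, hM, Nat.le_div_iff_mul_le hp]
      rw [mul_comm]; omega
    · ext j
      fin_cases j
      · simp [he]; omega
      · simp [he, hk]
  have hinj : Function.Injective e := by
    intro a b hab
    have := DFunLike.congr_fun hab 1
    simp [he] at this
    omega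
  set G : Polynomial K := ∑ k ∈ Finset.range (M + 1), Polynomial.monomial k (coeff (e k) F) with hG
  have hGc : ∀ k ≤ M, G.coeff k = coeff (e k) F := by
    intro k hk
    rw [hG, Polynomial.finsetSum_coeff, Finset.sum_eq_single k]
    · simp
    · intro b _ hb; simp [Polynomial.coeff_monomial, hb]
    · intro h; simp at h; omega
  have hG0 : G ≠ 0 := by
    intro h
    have := hGc 0 (Nat.zero_le _)
    rw [h] at this
    simp [he] at this
    exact hFn this.symm
  have hGdeg : G.natDegree ≤ M := by
    apply Polynomial.natDegree_sum_le_of_forall_le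
    intro k hk
    refine (Polynomial.natDegree_monomial_le _).trans ?_
    simp at hk; omega
  set ev : MvPolynomial (Fin 2) K →ₐ[K] MvPolynomial (Fin 2) K := aeval ![X 1 ^ q, X 0 ^ p] with hev
  have hFG : F = X 0 ^ (n % p) * ev (G.homogenize M) := by
    conv_lhs => rw [eq_sum_of_support F e _ hinj.injOn hsupp]
    rw [Polynomial.homogenize, map_sum, Finset.Nat.sum_antidiagonal_eq_sum_range_succ_mk,
      Finset.mul_sum]
    refine Finset.sum_congr rfl fun k hk => ?_
    have hk' : k ≤ M := by simp at hk; omega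
    simp only
    rw [hGc k hk', hev, aeval_monomial, Finsupp.prod_fintype _ _ (by simp), Fin.prod_univ_two]
    have h3 : n - p * k = n % p + p * (M - k) := by
      have h4 := Nat.mod_add_div n p
      rw [Nat.mul_sub]
      have h5 := Nat.mul_le_mul_left p hk'
      rw [← hM] at h4
      omega
    rw [monomial_eq, Finsupp.prod_fintype _ _ (by simp), Fin.prod_univ_two]
    simp [he, h3, pow_add, pow_mul]
    ring
  have hmod : n % p = 0 := by
    by_contra h
    exact hpx _ (Nat.pos_of_ne_zero h) (hfac _ ⟨_, hFG⟩)
  rw [hmod, pow_zero, one_mul] at hFG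
  have hnM : n = p * M := by
    have h4 := Nat.mod_add_div n p
    rw [hmod, ← hM] at h4
    omega
  have hM0 : 0 < M := by
    rcases Nat.eq_zero_or_pos M with h | h
    · rw [h] at hnM; omega
    · exact h
  have hGd : G.natDegree = M := by
    by_contra h
    have h1 : G.homogenize M = G.homogenize (M - 1) * X 1 := by
      have := Polynomial.homogenize_mul G 1 (m := M - 1) (n := 1) (by omega) (by simp)
      rw [mul_one, Nat.sub_add_cancel hM0] at this
      simpa using this
    refine hpx p hp (hfac _ ⟨ev (G.homogenize (M - 1)), ?_⟩)
    rw [hFG, h1, map_mul, hev]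
    simp [mul_comm]
  have hroot : ∀ μ, G.IsRoot μ → jac F (X 1 ^ q - C μ * X 0 ^ p) = 0 := by
    intro μ hμ
    obtain ⟨G', hG'⟩ := Polynomial.dvd_iff_isRoot.mpr hμ
    have hd : G'.natDegree ≤ M - 1 := by
      have h1 : G' ≠ 0 := by rintro rfl; simp at hG'; exact hG0 hG'
      have h2 := congrArg Polynomial.natDegree hG'
      rw [Polynomial.natDegree_mul (Polynomial.X_sub_C_ne_zero _) h1, Polynomial.natDegree_X_sub_C] at h2
      omega
    have h1 : G.homogenize M = (X 0 - C μ * X 1) * G'.homogenize (M - 1) := by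
      have := Polynomial.homogenize_mul (Polynomial.X - Polynomial.C μ) G' (m := 1) (n := M - 1)
        (by simp) hd
      rw [← hG', Nat.add_sub_cancel' hM0] at this
      rw [this]
      have := homogenize_sub_pow μ 1
      rw [pow_one, pow_one] at this
      rw [this]
    refine hfac _ ⟨ev (G'.homogenize (M - 1)), ?_⟩
    rw [hFG, h1, map_mul, hev]
    simp [algebraMap_eq]
  have huniq : ∀ μ ν, G.IsRoot μ → G.IsRoot ν → μ = ν := by
    intro μ ν h1 h2
    by_contra hne
    have h3 : jac F (C (ν - μ) * X 0 ^ p) = 0 := by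
      have : C (ν - μ) * X 0 ^ p = (X 1 ^ q - C μ * X 0 ^ p) -
          (X 1 ^ q - C ν * X 0 ^ p : MvPolynomial (Fin 2) K) := by
        rw [C_sub]; ring
      rw [this, map_sub, hroot μ h1, hroot ν h2, sub_zero]
    rw [← smul_eq_C_mul, Derivation.map_smul, smul_eq_zero] at h3
    rcases h3 with h3 | h3
    · exact hne (sub_eq_zero.mp h3).symm
    · exact hpx p hp h3
  obtain ⟨μ, hμ⟩ := IsAlgClosed.exists_root G (by
    rw [Polynomial.degree_eq_natDegree hG0, hGd]
    exact_mod_cast hM0.ne')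
  have hμ0 : μ ≠ 0 := by
    rintro rfl
    have := hroot 0 hμ
    simp only [C_0, zero_mul, sub_zero] at this
    exact hpy q hq this
  have hsplit := IsAlgClosed.splits G
  have hroots : G.roots = Multiset.replicate M μ := by
    rw [Multiset.eq_replicate]
    refine ⟨?_, ?_⟩
    · rw [← hGd]; exact hsplit.natDegree_eq_card_roots.symm
    · intro b hb
      exact huniq _ _ (Polynomial.isRoot_of_mem_roots hb) hμ
  have hGeq : G = Polynomial.C G.leadingCoeff * (Polynomial.X - Polynomial.C μ) ^ M := by
    have := hsplit.eq_prod_roots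
    rw [hroots] at this
    simpa using this
  have hc : G.leadingCoeff ≠ 0 := by simpa using hG0
  have hFeq : F = C G.leadingCoeff * (X 1 ^ q - C μ * X 0 ^ p) ^ M := by
    rw [hFG]
    conv_lhs => rw [hGeq]
    rw [Polynomial.homogenize_C_mul, homogenize_sub_pow, hev]
    simp [algebraMap_eq]
  refine ⟨M, G.leadingCoeff, μ, hc, hμ0, hnM, hFeq, ?_⟩
  set h := (X 1 ^ q - C μ * X 0 ^ p : MvPolynomial (Fin 2) K) with hh
  have hh0 : h ≠ 0 := by
    intro h0
    rw [h0, zero_pow hM0.ne', mul_zero] at hFeq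
    exact hF0 hFeq
  have hhN : JIsN (jac F) h 0 := jisN_zero hh0 (hroot μ hμ)
  have hCN : ∀ c : K, c ≠ 0 → JIsN (jac F) (C c) 0 := by
    intro c hc
    refine jisN_zero (by simpa using hc) ?_
    rw [← algebraMap_eq, Derivation.map_algebraMap]
  obtain ⟨a, ha⟩ := hLN.exists_isN (X_ne_zero (R := K) (0 : Fin 2))
  obtain ⟨b, hb⟩ := hLN.exists_isN (X_ne_zero (R := K) (1 : Fin 2))
  have e1 : jac F (X 0) = C (- (G.leadingCoeff * M * q)) * h ^ (M - 1) * X 1 ^ (q - 1) := by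
    rw [jac_X0]
    conv_lhs => rw [hFeq]
    rw [pderiv_C_mul, pderiv_pow, hh, map_sub, pderiv_C_mul, pderiv_pow, pderiv_pow,
      pderiv_X_self, pderiv_X_of_ne (by decide)]
    simp only [C_neg, C_mul, map_natCast]
    ring
  have e2 : jac F (X 1) = C (- (G.leadingCoeff * M * μ * p)) * h ^ (M - 1) * X 0 ^ (p - 1) := by
    rw [jac_X1]
    conv_lhs => rw [hFeq]
    rw [pderiv_C_mul, pderiv_pow, hh, map_sub, pderiv_C_mul, pderiv_pow, pderiv_pow,
      pderiv_X_self, pderiv_X_of_ne (by decide)]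
    simp only [C_neg, C_mul, map_natCast]
    ring
  have hMK : (M : K) ≠ 0 := by exact_mod_cast hM0.ne'
  have hpK : (p : K) ≠ 0 := by exact_mod_cast hp.ne'
  have hqK : (q : K) ≠ 0 := by exact_mod_cast hq.ne'
  have n1 := ha.succ_of (b := 0 + (M - 1) * 0 + (q - 1) * b) (by
    rw [e1]
    exact ((hCN _ (by simp [hc, hMK, hqK])).mul (hhN.pow _)).mul (hb.pow _))
  have n2 := hb.succ_of (b := 0 + (M - 1) * 0 + (p - 1) * a) (by
    rw [e2]
    exact ((hCN _ (by simp [hc, hMK, hpK, hμ0])).mul (hhN.pow _)).mul (ha.pow _))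
  by_contra! hcon
  have hp2 : 1 ≤ p - 1 := by omega
  have hq2 : 1 ≤ q - 1 := by omega
  have := Nat.mul_le_mul_right b hq2
  have := Nat.mul_le_mul_right a hp2
  omega
end Lead

section Final
variable {K : Type*} [Field K] [CharZero K]

lemma alg_fix (e : MvPolynomial (Fin 2) K →ₐ[K] MvPolynomial (Fin 2) K) {i : Fin 2}
    (he : ∀ j, j ≠ i → e (X j) = X j) {F : MvPolynomial (Fin 2) K} (hF : i ∉ F.vars) : e F = F := by
  have := hom_congr_vars (f₁ := (e : MvPolynomial (Fin 2) K →+* MvPolynomial (Fin 2) K))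
    (f₂ := RingHom.id _) (p₁ := F) (p₂ := F) (by ext a; simp [← algebraMap_eq]) (by
      intro j hj _
      exact he j (by rintro rfl; exact hF hj)) rfl
  exact this

lemma elem_exists (i : Fin 2) (F : MvPolynomial (Fin 2) K) (hF : i ∉ F.vars) :
    ∃ e : MvPolynomial (Fin 2) K ≃ₐ[K] MvPolynomial (Fin 2) K, IsElementary e⁻¹ ∧
      e (X i) = X i + F ∧ ∀ j, j ≠ i → e (X j) = X j := by
  let A : MvPolynomial (Fin 2) K → (MvPolynomial (Fin 2) K →ₐ[K] MvPolynomial (Fin 2) K) :=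
    fun G => aeval (fun j => if j = i then X i + G else X j)
  have hAi : ∀ G, A G (X i) = X i + G := by intro G; simp [A]
  have hAj : ∀ G j, j ≠ i → A G (X j) = X j := by intro G j hj; simp [A, hj]
  have hAF : ∀ G, A G F = F := fun G => alg_fix (A G) (hAj G) hF
  have hn : i ∉ (-F).vars := by rwa [vars_neg]
  refine ⟨AlgEquiv.ofAlgHom (A F) (A (-F)) ?_ ?_, ?_, ?_, ?_⟩
  · ext1 j
    by_cases hj : j = i
    · subst hj; simp [hAi, hAF]
    · simp [hAj _ _ hj]
  · ext1 j
    by_cases hj : j = i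
    · subst hj; simp [hAi, hAF]
    · simp [hAj _ _ hj]
  · exact ⟨i, -F, hn, hAi _, hAj _⟩
  · exact hAi _
  · exact hAj _

lemma tame_of_mul {e φ : MvPolynomial (Fin 2) K ≃ₐ[K] MvPolynomial (Fin 2) K}
    (he : IsElementary e⁻¹ ∨ IsLinearAut e⁻¹) (h : IsTame (e * φ)) : IsTame φ := by
  obtain ⟨l, hl, hl'⟩ := h
  refine ⟨e⁻¹ :: l, ?_, ?_⟩
  · intro ψ hψ
    rcases List.mem_cons.mp hψ with rfl | hψ
    · exact he
    · exact hl ψ hψ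
  · rw [List.prod_cons, ← hl', inv_mul_cancel_left]

lemma notMem_vars_of_pderiv {F : MvPolynomial (Fin 2) K} {i : Fin 2} (h : pderiv i F = 0) :
    i ∉ F.vars := by
  rw [mem_vars]
  rintro ⟨d, hd, hi⟩
  have := coeff_of_pderiv_zero h (m := d) (by simpa using hd)
  simp [this] at hi

lemma tame_base (ψ : MvPolynomial (Fin 2) K ≃ₐ[K] MvPolynomial (Fin 2) K)
    (h : pderiv 1 (ψ (X 0)) = 0) : IsTame ψ := by
  obtain ⟨c, hc, hJ⟩ := jac_unit ψ
  rw [jac_apply, h, zero_mul, sub_zero] at hJ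
  have hu : IsUnit (pderiv 0 (ψ (X 0)) * pderiv 1 (ψ (X 1))) := by
    rw [hJ]; exact (IsUnit.mk0 c hc).map C
  rw [IsUnit.mul_iff, isUnit_iff_eq_C_of_isReduced, isUnit_iff_eq_C_of_isReduced] at hu
  obtain ⟨⟨a, ha, ha'⟩, ⟨d, hd, hd'⟩⟩ := hu
  have ha0 := ha.ne_zero
  have hd0 := hd.ne_zero
  obtain ⟨b, hb⟩ : ∃ b, ψ (X 0) = C a * X 0 + C b := by
    set u := ψ (X 0) - C a * X 0 with hu
    have h0 : pderiv 0 u = 0 := by simp [hu, ha']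
    have h1 : pderiv 1 u = 0 := by
      rw [hu, map_sub, h, pderiv_C_mul, pderiv_X_of_ne (by decide)]; simp
    refine ⟨coeff 0 u, ?_⟩
    have : u = C (coeff 0 u) := by
      ext m
      rw [coeff_C]
      split_ifs with hm
      · rw [hm]
      · by_contra hne
        apply hm
        ext j
        fin_cases j
        · simpa using (coeff_of_pderiv_zero h0 hne).symm
        · simpa using (coeff_of_pderiv_zero h1 hne).symm
    rw [← this, hu]; ring
  obtain ⟨r, hr, hr'⟩ : ∃ r, ψ (X 1) = C d * X 1 + r ∧ 1 ∉ r.vars := by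
    refine ⟨ψ (X 1) - C d * X 1, by ring, notMem_vars_of_pderiv ?_⟩
    simp [hd']
  have hrd : (1 : Fin 2) ∉ (C (-d⁻¹) * r).vars := by
    intro h
    have := vars_mul _ _ h
    simp at this
    exact hr' this
  obtain ⟨e2, he2, h21, h20⟩ := elem_exists 1 (C (-d⁻¹) * r) hrd
  obtain ⟨e1, he1, h10, h11⟩ := elem_exists 0 (C (-(b * a⁻¹)) : MvPolynomial (Fin 2) K) (by rw [vars_C]; simp)
  apply tame_of_mul (Or.inl he2)
  apply tame_of_mul (Or.inl he1)
  refine ⟨[e1 * (e2 * ψ)], ?_, by simp⟩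
  intro χ hχ
  rw [List.mem_singleton] at hχ
  subst hχ
  right
  have hC1 : ∀ k : K, e1 (C k) = C k := fun k => e1.commutes k
  have hC2 : ∀ k : K, e2 (C k) = C k := fun k => e2.commutes k
  have hr2 : e2 r = r := alg_fix (e2 : MvPolynomial (Fin 2) K →ₐ[K] MvPolynomial (Fin 2) K) h20 hr'
  have hX0 : (e1 * (e2 * ψ)) (X 0) = C a * X 0 := by
    rw [AlgEquiv.mul_apply, AlgEquiv.mul_apply, hb, map_add, map_mul, hC2, hC2,
      h20 0 (by decide), map_add, map_mul, hC1, hC1, h10, mul_add, ← C_mul, add_assoc, ← C_add]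
    have : a * -(b * a⁻¹) + b = 0 := by field_simp; ring
    rw [this]; simp
  have hX1 : (e1 * (e2 * ψ)) (X 1) = C d * X 1 := by
    rw [AlgEquiv.mul_apply, AlgEquiv.mul_apply, hr, map_add, map_mul, hC2, h21, hr2, mul_add,
      ← mul_assoc, ← C_mul]
    have : d * -d⁻¹ = -1 := by field_simp
    rw [this, C_neg, C_1, neg_one_mul, neg_add_cancel_right, map_mul, hC1, h11 1 (by decide)]
  intro i
  fin_cases i
  · exact ⟨![a, 0], by simpa using hX0⟩
  · exact ⟨![0, d], by simpa using hX1⟩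

lemma JW_C {w : Fin 2 → ℕ} (c : K) : C c ∈ JW K w (Set.Iic 0) := by
  rw [mem_JW]
  intro m hm
  rw [coeff_C] at hm
  have : 0 = m := by by_contra h; simp [h] at hm
  subst this
  simp [jwt]

lemma JW_X {w : Fin 2 → ℕ} (i : Fin 2) : (X i : MvPolynomial (Fin 2) K) ∈ JW K w (Set.Iic (w i)) := by
  classical
  rw [mem_JW]
  intro m hm
  rw [coeff_X] at hm
  have : Finsupp.single i 1 = m := by by_contra h; simp [h] at hm
  subst this
  rw [jwt_single]
  simp

lemma JW_Iic_mul {w : Fin 2 → ℕ} {a b : ℤ} {u v : MvPolynomial (Fin 2) K}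
    (hu : u ∈ JW K w (Set.Iic a)) (hv : v ∈ JW K w (Set.Iic b)) :
    u * v ∈ JW K w (Set.Iic (a + b)) :=
  JW_mul (by intro s hs t ht; simp at *; omega) hu hv

lemma JW_Iic_pow {w : Fin 2 → ℕ} {a : ℤ} {u : MvPolynomial (Fin 2) K}
    (hu : u ∈ JW K w (Set.Iic a)) (k : ℕ) :
    u ^ k ∈ JW K w (Set.Iic (k * a)) := by
  induction k with
  | zero => simpa using JW_C (w := w) (1 : K)
  | succ k ih =>
    rw [pow_succ]
    convert JW_Iic_mul ih hu using 3
    push_cast; ring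

lemma JW_alg {w : Fin 2 → ℕ} (e : MvPolynomial (Fin 2) K →ₐ[K] MvPolynomial (Fin 2) K)
    (he : ∀ i, e (X i) ∈ JW K w (Set.Iic (w i))) {k : ℤ} {u : MvPolynomial (Fin 2) K}
    (hu : u ∈ JW K w (Set.Iic k)) : e u ∈ JW K w (Set.Iic k) := by
  rw [mem_JW] at hu
  rw [u.as_sum, map_sum]
  refine Submodule.sum_mem _ fun m hm => ?_
  have h1 := hu m (by simpa using hm)
  rw [monomial_eq, Finsupp.prod_fintype _ _ (by simp), Fin.prod_univ_two, map_mul, map_mul, map_pow,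
    map_pow]
  have hC : e (C (coeff m u)) = C (coeff m u) := e.commutes _
  rw [hC]
  refine JW_mono ?_ (JW_Iic_mul (JW_C _) (JW_Iic_mul (JW_Iic_pow (he 0) _) (JW_Iic_pow (he 1) _)))
  intro s hs
  simp [jwt] at *
  linarith

lemma support_after {w : Fin 2 → ℕ} (e : MvPolynomial (Fin 2) K →ₐ[K] MvPolynomial (Fin 2) K)
    (he : ∀ i, e (X i) ∈ JW K w (Set.Iic (w i))) {N : ℤ} {f F : MvPolynomial (Fin 2) K}
    (hfF : f - F ∈ JW K w (Set.Iic (N - 1))) {a : K} {i : Fin 2} {M : ℕ}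
    (heF : e F = C a * X i ^ M) {m : Fin 2 →₀ ℕ} (hm : coeff m (e f) ≠ 0) :
    m = Finsupp.single i M ∨ jwt w m ≤ N - 1 := by
  classical
  have h1 : e f = e F + e (f - F) := by rw [← map_add]; congr 1; ring
  by_cases h2 : coeff m (e (f - F)) = 0
  · left
    rw [h1, coeff_add, h2, add_zero, heF, coeff_C_mul, coeff_X_pow] at hm
    by_contra h
    rw [if_neg (fun h' => h h'.symm)] at hm
    simp at hm
  · right
    exact mem_JW.mp (JW_alg e he hfF) m h2

/-- the complexity -/
noncomputable def jdeg (f : MvPolynomial (Fin 2) K) : ℕ := degreeOf 0 f + degreeOf 1 f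

lemma reduce [IsAlgClosed K] {f : MvPolynomial (Fin 2) K} (hf : JLN (jac f))
    (h0 : 0 < degreeOf 0 f) (h1 : 0 < degreeOf 1 f) :
    ∃ e : MvPolynomial (Fin 2) K ≃ₐ[K] MvPolynomial (Fin 2) K, IsElementary e⁻¹ ∧
      jdeg (e f) < jdeg f := by
  have hf0 : f ≠ 0 := by rintro rfl; simp at h0
  obtain ⟨n, hn⟩ : ∃ n, n = degreeOf 0 f := ⟨_, rfl⟩
  rw [← hn] at h0
  have hdeg : ∀ m, coeff m f ≠ 0 → m 0 ≤ n := by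
    intro m hm
    rw [hn]; exact monomial_le_degreeOf 0 (by simpa using hm)
  have hmon : ∀ m, coeff m f ≠ 0 → m 0 = n → m 1 = 0 := fun m hm h => monic_of_LN hf h0 hdeg hm h
  have hfn : coeff (Finsupp.single 0 n) f ≠ 0 := by
    obtain ⟨m, hm, hm'⟩ := Finset.exists_mem_eq_sup f.support (by simpa using hf0) (fun m => m 0)
    rw [← degreeOf_eq_sup, ← hn] at hm'
    have hm : coeff m f ≠ 0 := by simpa using hm
    have : m = Finsupp.single 0 n := by
      ext j
      fin_cases j
      · simp [hm']
      · simp [hmon m hm hm'.symm]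
    rwa [this] at hm
  -- the extremal exponent
  have hne : (f.support.filter (fun m => 0 < m 1)).Nonempty := by
    obtain ⟨m, hm, hm'⟩ := Finset.exists_mem_eq_sup f.support (by simpa using hf0) (fun m => m 1)
    rw [← degreeOf_eq_sup] at hm'
    exact ⟨m, by rw [Finset.mem_filter]; exact ⟨hm, by omega⟩⟩
  obtain ⟨m₁, hm₁, hmax⟩ := Finset.exists_max_image _
    (fun m : Fin 2 →₀ ℕ => (m 1 : ℚ) / ((n - m 0 : ℕ) : ℚ)) hne
  rw [Finset.mem_filter, mem_support_iff] at hm₁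
  obtain ⟨hm₁, hm₁'⟩ := hm₁
  have hlt : ∀ m, coeff m f ≠ 0 → 0 < m 1 → m 0 < n := by
    intro m hm hm'
    have := hdeg m hm
    have := hmon m hm
    by_contra h
    have := this (by omega)
    omega
  have hlt₁ := hlt m₁ hm₁ hm₁'
  obtain ⟨d, p, q, hd, hpq, hp, hq⟩ := Nat.exists_coprime' (m := n - m₁ 0) (n := m₁ 1)
    (Nat.gcd_pos_of_pos_right _ hm₁')
  have hp0 : 0 < p := by
    rcases Nat.eq_zero_or_pos p with h | h
    · rw [h] at hp; omega
    · exact h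
  have hq0 : 0 < q := by
    rcases Nat.eq_zero_or_pos q with h | h
    · rw [h] at hq; omega
    · exact h
  have hle : ∀ m, coeff m f ≠ 0 → q * m 0 + p * m 1 ≤ q * n := by
    intro m hm
    have hm0 := hdeg m hm
    rcases Nat.eq_zero_or_pos (m 1) with h | h
    · rw [h]; simpa using Nat.mul_le_mul_left q hm0
    · have h2 := hmax m (by rw [Finset.mem_filter, mem_support_iff]; exact ⟨hm, h⟩)
      have h3 := hlt m hm h
      rw [div_le_div_iff₀ (by exact_mod_cast Nat.sub_pos_of_lt h3)
        (by exact_mod_cast Nat.sub_pos_of_lt hlt₁)] at h2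
      have h2 : m 1 * (n - m₁ 0) ≤ m₁ 1 * (n - m 0) := by exact_mod_cast h2
      rw [hp, hq] at h2
      have h4 : p * m 1 ≤ q * (n - m 0) := by
        apply Nat.le_of_mul_le_mul_right _ hd
        calc _ = m 1 * (p * d) := by ring
          _ ≤ _ := h2
          _ = _ := by ring
      calc q * m 0 + p * m 1 ≤ q * m 0 + q * (n - m 0) := by omega
        _ = q * n := by rw [← mul_add]; congr 1; omega
  have heq : q * m₁ 0 + p * m₁ 1 = q * n := by
    have : n = m₁ 0 + p * d := by omega
    rw [hq, this]; ring
  have hwt : ∀ m, jwt ![q, p] m = q * m 0 + p * m 1 := by intro m; simp [jwt]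
  have hsub := sub_jtop_mem ![q, p] (q * n) f (by
    intro m hm; rw [hwt]; exact_mod_cast hle m hm)
  have hLN := LN_top hf (jtop_mem ![q, p] (q * n) f) hsub
  set F := jtop ![q, p] (q * n) f with hF
  have hFc : ∀ m, coeff m F = if jwt ![q, p] m = q * n then coeff m f else 0 := coeff_jtop _ _ _
  obtain ⟨M, c, μ, hc, hμ, hnM, hFeq, hor⟩ := lead_form hLN h0 hp0 hq0 hpq (by
      intro m hm
      rw [hFc, hwt] at hm
      by_contra h
      have : ((q : ℤ) * m 0 + p * m 1) ≠ q * n := by exact_mod_cast h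
      simp [this] at hm) (by
      rw [hFc, hwt]; simpa using hfn) (m₁ := m₁) (by
      rw [hFc, hwt, if_pos]
      · exact hm₁
      · exact_mod_cast heq) hm₁'
  have hM0 : 0 < M := by
    rcases Nat.eq_zero_or_pos M with h | h
    · rw [h] at hnM; omega
    · exact h
  -- degree bound for f
  have hd1 : q * M ≤ degreeOf 1 f := by
    have hh : coeff (Finsupp.single 1 q) (X 1 ^ q - C μ * X 0 ^ p : MvPolynomial (Fin 2) K) ≠ 0 := by
      classical
      rw [coeff_sub, coeff_C_mul, coeff_X_pow, coeff_X_pow, if_pos rfl, if_neg]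
      · simp
      · intro h
        have := DFunLike.congr_fun h 0
        simp at this
        omega
    have hhd : q ≤ degreeOf 1 (X 1 ^ q - C μ * X 0 ^ p : MvPolynomial (Fin 2) K) := by
      have := monomial_le_degreeOf (1 : Fin 2) (mem_support_iff.mpr hh)
      simpa using this
    have hh0 : (X 1 ^ q - C μ * X 0 ^ p : MvPolynomial (Fin 2) K) ≠ 0 := by
      intro h; rw [h] at hh; simp at hh
    have hFd : q * M ≤ degreeOf 1 F := by
      rw [hFeq, degreeOf_mul_eq (by simpa using hc) (pow_ne_zero _ hh0), degreeOf_pow_eq _ _ _ hh0]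
      have := Nat.mul_le_mul_left M hhd
      rw [mul_comm q M]
      omega
    refine hFd.trans ?_
    rw [degreeOf_eq_sup, degreeOf_eq_sup]
    apply Finset.sup_mono
    intro m hm
    rw [mem_support_iff] at *
    rw [hFc] at hm
    intro h
    simp [h] at hm
  have hXX : ∀ (i : Fin 2), (X i : MvPolynomial (Fin 2) K) ∈ JW K ![q, p] (Set.Iic (![q, p] i : ℕ)) :=
    fun i => JW_X i
  have key : ∀ (e : MvPolynomial (Fin 2) K ≃ₐ[K] MvPolynomial (Fin 2) K) (a b : ℕ),
      (∀ m, coeff m (e f) ≠ 0 → m 0 ≤ a ∧ m 1 ≤ b) → a + b < p * M + q * M → jdeg (e f) < jdeg f := by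
    intro e a b h hab
    have ha : degreeOf 0 (e f) ≤ a := by
      rw [degreeOf_eq_sup]
      exact Finset.sup_le fun m hm => (h m (mem_support_iff.mp hm)).1
    have hb : degreeOf 1 (e f) ≤ b := by
      rw [degreeOf_eq_sup]
      exact Finset.sup_le fun m hm => (h m (mem_support_iff.mp hm)).2
    unfold jdeg
    omega
  rcases hor with rfl | rfl
  · obtain ⟨e, he, he0, he1⟩ := elem_exists (0 : Fin 2) (C μ⁻¹ * X 1 ^ q : MvPolynomial (Fin 2) K)
      (notMem_vars_of_pderiv (by
        rw [pderiv_C_mul, pderiv_pow, pderiv_X_of_ne (by decide)]; simp))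
    refine ⟨e, he, key e M (q * M - 1) ?_ ?_⟩
    · intro m hm
      have := support_after (w := ![q, 1]) (e : MvPolynomial (Fin 2) K →ₐ[K] MvPolynomial (Fin 2) K)
        (N := q * n) (F := F) (f := f) (by
          intro i
          fin_cases i
          · change e (X 0) ∈ _
            rw [he0]
            refine Submodule.add_mem _ (hXX 0) ?_
            simpa using JW_Iic_mul (JW_C μ⁻¹) (JW_Iic_pow (hXX 1) q)
          · change e (X 1) ∈ _
            rw [he1 1 (by decide)]
            exact hXX 1) hsub (a := c * (-μ) ^ M) (i := 0) (M := M) (by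
          change e F = _
          have hC : ∀ k : K, e (C k) = C k := fun k => e.commutes k
          have : C μ * C μ⁻¹ = (1 : MvPolynomial (Fin 2) K) := by
            rw [← C_mul, mul_inv_cancel₀ hμ, C_1]
          rw [hFeq, map_mul, map_pow, map_sub, map_mul, map_pow, map_pow, hC, hC, he0,
            he1 1 (by decide), pow_one, mul_add, ← mul_assoc, this, C_mul, C_pow, C_neg, mul_assoc,
            ← mul_pow]
          congr 2
          ring) hm
      rcases this with rfl | h
      · simp
      · rw [hwt] at h
        have h : q * m 0 + m 1 + 1 ≤ q * M := by
          have hn' : n = M := by omega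
          rw [hn'] at h
          zify
          push_cast at h
          linarith
        refine ⟨?_, by omega⟩
        apply Nat.le_of_mul_le_mul_left _ hq0
        omega
    · have := Nat.mul_pos hq0 hM0
      omega
  · obtain ⟨e, he, he1, he0⟩ := elem_exists (1 : Fin 2) (C μ * X 0 ^ p : MvPolynomial (Fin 2) K)
      (notMem_vars_of_pderiv (by
        rw [pderiv_C_mul, pderiv_pow, pderiv_X_of_ne (by decide)]; simp))
    refine ⟨e, he, key e (p * M - 1) M ?_ ?_⟩
    · intro m hm
      have := support_after (w := ![1, p]) (e : MvPolynomial (Fin 2) K →ₐ[K] MvPolynomial (Fin 2) K)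
        (N := (1 : ℕ) * n) (F := F) (f := f) (by
          intro i
          fin_cases i
          · change e (X 0) ∈ _
            rw [he0 0 (by decide)]
            exact hXX 0
          · change e (X 1) ∈ _
            rw [he1]
            refine Submodule.add_mem _ (hXX 1) ?_
            simpa using JW_Iic_mul (JW_C μ) (JW_Iic_pow (hXX 0) p)) hsub (a := c) (i := 1) (M := M) (by
          change e F = _
          have hC : ∀ k : K, e (C k) = C k := fun k => e.commutes k
          rw [hFeq, map_mul, map_pow, map_sub, map_mul, map_pow, map_pow, hC, hC, he1,
            he0 0 (by decide), pow_one, add_sub_cancel_right]) hm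
      rcases this with rfl | h
      · simp
      · rw [hwt] at h
        have h : m 0 + p * m 1 + 1 ≤ p * M := by
          rw [hnM] at h
          zify
          push_cast at h
          linarith
        refine ⟨by omega, ?_⟩
        apply Nat.le_of_mul_le_mul_left _ hp0
        omega
    · have := Nat.mul_pos hp0 hM0
      omega

lemma pderiv_of_degreeOf {f : MvPolynomial (Fin 2) K} {i : Fin 2} (h : degreeOf i f = 0) :
    pderiv i f = 0 := by
  ext m
  rw [coeff_pderiv]
  by_contra hne
  have := monomial_le_degreeOf i (mem_support_iff.mpr (left_ne_zero_of_mul hne))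
  simp [h] at this

lemma tame_all [IsAlgClosed K] : ∀ (N : ℕ)
    (φ : MvPolynomial (Fin 2) K ≃ₐ[K] MvPolynomial (Fin 2) K), jdeg (φ (X 0)) ≤ N → IsTame φ := by
  intro N
  induction N using Nat.strong_induction_on with
  | _ N ih =>
    intro φ hφ
    rcases Nat.eq_zero_or_pos (degreeOf 1 (φ (X 0))) with h1 | h1
    · exact tame_base φ (pderiv_of_degreeOf h1)
    rcases Nat.eq_zero_or_pos (degreeOf 0 (φ (X 0))) with h0 | h0
    · have h0 := pderiv_of_degreeOf h0
      let s : MvPolynomial (Fin 2) K ≃ₐ[K] MvPolynomial (Fin 2) K :=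
        renameEquiv K (Equiv.swap 0 1)
      have hs : IsLinearAut s⁻¹ := by
        intro i
        fin_cases i
        · refine ⟨![0, 1], ?_⟩
          change (renameEquiv K (Equiv.swap 0 1)).symm (X 0) = _
          simp
        · refine ⟨![1, 0], ?_⟩
          change (renameEquiv K (Equiv.swap 0 1)).symm (X 1) = _
          simp
      refine tame_of_mul (Or.inr hs) (tame_base _ ?_)
      have h2 := pderiv_rename (R := K) (Equiv.swap (0 : Fin 2) 1).injective 0 (φ (X 0))
      rw [h0, Equiv.swap_apply_left] at h2
      have h3 : pderiv 1 (rename (Equiv.swap (0 : Fin 2) 1) (φ (X 0))) = 0 := by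
        rw [h2]; exact map_zero _
      exact h3
    · obtain ⟨e, he, hlt⟩ := reduce (jac_LN φ) h0 h1
      refine tame_of_mul (Or.inl he) (ih (jdeg (e (φ (X 0)))) (by omega) _ ?_)
      rw [AlgEquiv.mul_apply]
end Final

/-- **Jung's theorem.** Every `K`-algebra automorphism of the polynomial ring in two
variables over an algebraically closed field of characteristic zero is tame. -/
theorem jung_every_automorphism_of_plane_is_tame
    {K : Type*} [Field K] [IsAlgClosed K] [CharZero K]
    (φ : MvPolynomial (Fin 2) K ≃ₐ[K] MvPolynomial (Fin 2) K) :
    IsTame φ := by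
  exact tame_all _ φ le_rfl
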